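/- arXiv:1304.5392 — 2 statements merged into one kernel-verified Lean document; each statement's English description precedes it below -/
import Mathlib

section
/- Let p be a nonzero real number. The chain of inequalities (sin(x)/x)^(2p) + (tan(x)/x)^p > (x/sin(x))^(2p) + (x/tan(x))^p > 2 holds for every x ∈ (0, π/2) if and only if p ≥ (ln 2)/(2(ln π − ln 2)). -/
open Real Set

/-!
Put `u = sin x / x` and `v = tan x / x`. The first inequality reads
`(u ^ (2 * p))⁻¹ + (v ^ p)⁻¹ < u ^ (2 * p) + v ^ p`, that is, `1 < (u ^ 2 * v) ^ p`; since
`1 < u ^ 2 * v` (Adamović–Mitrinović), this means `0 < p`.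

As `x → π / 2`, the middle member of the chain tends to `(π / 2) ^ (2 * p)`, so the second
inequality forces `2 ≤ (π / 2) ^ (2 * p)`, which is the stated bound on `p`. Conversely, by
monotonicity of power means the second inequality persists when the exponent grows, so for each `x`
it suffices to prove it for one exponent not exceeding the critical one, `0.767…`. For `x ^ 2 ≤ 2`
the exponent `3 / 4` works, by comparison with rational functions of `x ^ 2`. For `2 ≤ x ^ 2` the
critical exponent `q` itself works: with `y = π / 2 - x`, the first term falls short of `2` by at
most a constant multiple of `y`, while the second exceeds `(x * y) ^ q`, which outweighs this loss
because `q < 1` and `y` is small.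
-/

theorem lt_rpow_iff_pow_lt_pow {a b r : ℝ} {m n : ℕ} (ha : 0 ≤ a) (hb : 0 ≤ b) (hn : n ≠ 0)
    (hr : r * n = m) : a < b ^ r ↔ a ^ n < b ^ m := by
  rw [← pow_lt_pow_iff_left₀ ha (rpow_nonneg hb r) hn, ← rpow_mul_natCast hb, hr, rpow_natCast]

theorem rpow_mul_one_add_le_rpow {a x p : ℝ} (ha : 0 < a) (hx : 0 ≤ x) (hp : 1 ≤ p) :
    a ^ p * (1 + p * (x / a - 1)) ≤ x ^ p := by
  have hxa : 0 ≤ x / a := by positivity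
  calc a ^ p * (1 + p * (x / a - 1)) ≤ a ^ p * (1 + (x / a - 1)) ^ p := by
        gcongr
        exact one_add_mul_self_le_rpow_one_add (by linarith) hp
    _ = x ^ p := by
        rw [add_sub_cancel, ← mul_rpow ha.le hxa, mul_div_cancel₀ x ha.ne']

theorem two_lt_rpow_add_rpow_of_le {a b p q : ℝ} (ha : 0 ≤ a) (hb : 0 ≤ b) (hq : 0 < q)
    (hqp : q ≤ p) (h : 2 < a ^ q + b ^ q) : 2 < a ^ p + b ^ p := by
  have hr : 1 ≤ p / q := (one_le_div hq).2 hqp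
  have tangent {c : ℝ} (hc : 0 ≤ c) : 1 + p / q * (c ^ q - 1) ≤ c ^ p := by
    simpa [← rpow_mul hc, mul_div_cancel₀ p hq.ne'] using
      rpow_mul_one_add_le_rpow one_pos (rpow_nonneg hc q) hr
  have : 0 < p / q * (a ^ q + b ^ q - 2) := mul_pos (by linarith) (by linarith)
  linarith [tangent ha, tangent hb]

theorem inv_add_inv_lt_add_iff {u v : ℝ} (hu : 0 < u) (hv : 0 < v) :
    u⁻¹ + v⁻¹ < u + v ↔ 1 < u * v := by
  rw [inv_add_inv hu.ne' hv.ne', div_lt_iff₀ (by positivity),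
    lt_mul_iff_one_lt_right (by positivity)]

theorem cos_eq_one_sub_two_mul_sin_half_sq (x : ℝ) : cos x = 1 - 2 * sin (x / 2) ^ 2 := by
  rw [sin_sq_eq_half_sub, mul_div_cancel₀ x two_ne_zero]
  ring

theorem cos_le_quartic (x : ℝ) : cos x ≤ 1 - x ^ 2 / 2 + x ^ 4 / 24 := by
  wlog hx : 0 ≤ x generalizing x
  · simpa [Even.neg_pow (show Even 4 by decide)] using this (-x) (by linarith)
  rcases le_total 24 (x ^ 2) with h | h
  · nlinarith [cos_le_one x]
  · have hcubic : 0 ≤ x / 2 - (x / 2) ^ 3 / 6 := by nlinarith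
    calc cos x = 1 - 2 * sin (x / 2) ^ 2 := cos_eq_one_sub_two_mul_sin_half_sq x
      _ ≤ 1 - 2 * (x / 2 - (x / 2) ^ 3 / 6) ^ 2 := by
          gcongr
          exact sin_ge_sub_cube (by positivity)
      _ ≤ 1 - x ^ 2 / 2 + x ^ 4 / 24 := by
          linarith [show 0 ≤ x ^ 6 by positivity]

theorem sin_le_quintic {x : ℝ} (hx : 0 ≤ x) : sin x ≤ x - x ^ 3 / 6 + x ^ 5 / 120 := by
  let f : ℝ → ℝ := fun t ↦ t - t ^ 3 / 6 + t ^ 5 / 120 - sin t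
  have hf (t : ℝ) : HasDerivAt f (1 - t ^ 2 / 2 + t ^ 4 / 24 - cos t) t := by
    refine ((((hasDerivAt_id' t).sub ((hasDerivAt_pow 3 t).div_const 6)).add
      ((hasDerivAt_pow 5 t).div_const 120)).sub (hasDerivAt_sin t)).congr_deriv ?_
    norm_num
    ring
  have hmono : Monotone f := monotone_of_hasDerivAt_nonneg hf fun t ↦
    sub_nonneg.2 (cos_le_quartic t)
  simpa [f] using hmono hx

theorem three_add_sq_mul_sin_sq_le (x : ℝ) : (3 + x ^ 2) * sin x ^ 2 ≤ 3 * x ^ 2 := by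
  wlog hx : 0 ≤ x generalizing x
  · simpa using this (-x) (by linarith)
  rcases le_total 2 (x ^ 2) with h | h
  · nlinarith [sin_sq_le_one x]
  · have hsin : 0 ≤ sin x := sin_nonneg_of_nonneg_of_le_pi hx (by nlinarith [pi_gt_three])
    calc (3 + x ^ 2) * sin x ^ 2 ≤ (3 + x ^ 2) * (x - x ^ 3 / 6 + x ^ 5 / 120) ^ 2 := by
          gcongr
          exact sin_le_quintic hx
      _ = 3 * x ^ 2 - x ^ 6 / 5 * (1 - 13 / 72 * x ^ 2 + 37 / 2880 * x ^ 4 - x ^ 6 / 2880) := by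
          ring
      _ ≤ 3 * x ^ 2 := by
          have : 0 ≤ 1 - 13 / 72 * x ^ 2 + 37 / 2880 * x ^ 4 - x ^ 6 / 2880 := by
            nlinarith [sq_nonneg (x ^ 2), pow_nonneg (sq_nonneg x) 2]
          nlinarith [show 0 ≤ x ^ 6 by positivity]

-- The left side is the `[2/2]` Padé approximant of `cos` at `0`.
theorem twelve_sub_div_twelve_add_le_cos (x : ℝ) : (12 - 5 * x ^ 2) / (12 + x ^ 2) ≤ cos x := by
  rw [div_le_iff₀ (by positivity), cos_eq_one_sub_two_mul_sin_half_sq]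
  linarith [three_add_sq_mul_sin_sq_le (x / 2)]

theorem pow_three_mul_cos_lt_sin_pow_three {x : ℝ} (hx : 0 < x) (hx' : x ^ 2 ≤ 6) :
    x ^ 3 * cos x < sin x ^ 3 := by
  calc x ^ 3 * cos x ≤ x ^ 3 * (1 - x ^ 2 / 2 + x ^ 4 / 24) := by
        gcongr
        exact cos_le_quartic x
    _ < x ^ 3 * (1 - x ^ 2 / 6) ^ 3 := by
        gcongr
        have : 0 < x ^ 4 * (9 - x ^ 2) := mul_pos (by positivity) (by linarith)
        linarith
    _ = (x - x ^ 3 / 6) ^ 3 := by ring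
    _ ≤ sin x ^ 3 := by
        gcongr
        · nlinarith
        · exact sin_ge_sub_cube hx.le

theorem one_lt_sin_div_sq_mul_tan_div {x : ℝ} (hx : 0 < x) (hx' : x < π / 2) :
    1 < (sin x / x) ^ 2 * (tan x / x) := by
  have hcos : 0 < cos x := cos_pos_of_mem_Ioo ⟨by linarith, hx'⟩
  have hcube := pow_three_mul_cos_lt_sin_pow_three hx (by nlinarith [pi_lt_four])
  rw [tan_eq_sin_div_cos, div_pow, div_div, div_mul_div_comm, one_lt_div (by positivity)]
  linarith

theorem rpow_add_rpow_lt_sin_div_rpow_add_tan_div_rpow_iff {x p : ℝ} (hx : 0 < x)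
    (hx' : x < π / 2) :
    (x / sin x) ^ (2 * p) + (x / tan x) ^ p < (sin x / x) ^ (2 * p) + (tan x / x) ^ p ↔
      0 < p := by
  have hsin : 0 < sin x := sin_pos_of_pos_of_lt_pi hx (by linarith)
  have htan : 0 < tan x := tan_pos_of_pos_of_lt_pi_div_two hx hx'
  have hprod := one_lt_sin_div_sq_mul_tan_div hx hx'
  have hmul : (sin x / x) ^ (2 * p) * (tan x / x) ^ p = ((sin x / x) ^ 2 * (tan x / x)) ^ p := by
    rw [mul_rpow (by positivity) (by positivity), rpow_mul (by positivity), rpow_two]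
  rw [← inv_div (sin x), ← inv_div (tan x), inv_rpow (by positivity), inv_rpow (by positivity),
    inv_add_inv_lt_add_iff (by positivity) (by positivity), hmul,
    one_lt_rpow_iff_of_pos (by linarith)]
  simp only [hprod, hprod.not_gt, true_and, false_and, or_false]

theorem sq_mul_pow_three_lt_sq {z : ℝ} (hz : 0 < z) (hz' : z ≤ 2) :
    (28 + 3 * z) ^ 2 * (1 - z / 6 + z ^ 2 / 120) ^ 3 < (28 - 4 * z) ^ 2 := by
  have bernstein (i j : ℕ) : 0 ≤ z ^ i * (2 - z) ^ j :=
    mul_nonneg (pow_nonneg hz.le i) (pow_nonneg (sub_nonneg.2 hz') j)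
  -- All coefficients in the Bernstein basis of `[0, 2]` are positive.
  have hcofactor : 0 < 10483200 - 6112000 * z + 855360 * z ^ 2 - 13440 * z ^ 3 -
      4744 * z ^ 4 + 372 * z ^ 5 - 9 * z ^ 6 := by
    linarith [bernstein 0 6, bernstein 1 5, bernstein 2 4, bernstein 3 3,
      bernstein 4 2, bernstein 5 1, bernstein 6 0]
  linarith [mul_pos (sq_pos_of_pos hz) hcofactor]

theorem pow_four_mul_pow_three_lt {z : ℝ} (hz : 0 < z) (hz' : z ≤ 2) :
    (28 - 11 * z) ^ 4 * (12 + z) ^ 3 <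
      (28 - 4 * z) ^ 2 * (28 + 3 * z) ^ 2 * (12 - 5 * z) ^ 3 := by
  have bernstein (i j : ℕ) : 0 ≤ z ^ i * (2 - z) ^ j :=
    mul_nonneg (pow_nonneg hz.le i) (pow_nonneg (sub_nonneg.2 hz') j)
  have hcofactor : 0 < 28449792 - 30369024 * z + 7631232 * z ^ 2 + 1020256 * z ^ 3 -
      332404 * z ^ 4 - 32641 * z ^ 5 := by
    linarith [bernstein 0 5, bernstein 1 4, bernstein 2 3, bernstein 3 2,
      bernstein 4 1, bernstein 5 0]
  linarith [mul_pos (sq_pos_of_pos hz) hcofactor]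

-- With `z = x ^ 2` the left side is `1 + (z / 4) / (1 - z / 7)`. Here `1 + z / 4` is the
-- first-order expansion of `(x / sin x) ^ (3 / 2)`, and `7` is chosen so that up to `z = 2` the
-- bound holds and is sharp enough for its complement to `2` to lie below
-- `(x / tan x) ^ (3 / 4)`.
theorem div_lt_div_sin_rpow {x : ℝ} (hx : 0 < x) (hx2 : x ^ 2 ≤ 2) :
    (28 + 3 * x ^ 2) / (28 - 4 * x ^ 2) < (x / sin x) ^ (2 * (3 / 4) : ℝ) := by
  have hsin : 0 < sin x := sin_pos_of_pos_of_lt_pi hx (by nlinarith [pi_gt_three])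
  have hden : 0 < 28 - 4 * x ^ 2 := by linarith
  have hS : 0 < 1 - x ^ 2 / 6 + (x ^ 2) ^ 2 / 120 := by nlinarith
  have hsin_le : sin x ≤ x * (1 - x ^ 2 / 6 + (x ^ 2) ^ 2 / 120) := by
    linarith [sin_le_quintic hx.le]
  rw [lt_rpow_iff_pow_lt_pow (m := 3) (n := 2) (by positivity) (by positivity) two_ne_zero
    (by norm_num)]
  calc ((28 + 3 * x ^ 2) / (28 - 4 * x ^ 2)) ^ 2
      < (1 / (1 - x ^ 2 / 6 + (x ^ 2) ^ 2 / 120)) ^ 3 := by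
        rw [div_pow, div_pow, one_pow, div_lt_div_iff₀ (by positivity) (by positivity), one_mul]
        exact sq_mul_pow_three_lt_sq (by positivity) hx2
    _ ≤ (x / sin x) ^ 3 := by
        gcongr ?_ ^ 3
        rwa [div_le_div_iff₀ hS hsin, one_mul]

theorem two_sub_div_lt_div_tan_rpow {x : ℝ} (hx : 0 < x) (hx2 : x ^ 2 ≤ 2) :
    2 - (28 + 3 * x ^ 2) / (28 - 4 * x ^ 2) < (x / tan x) ^ (3 / 4 : ℝ) := by
  have hsin : 0 < sin x := sin_pos_of_pos_of_lt_pi hx (by nlinarith [pi_gt_three])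
  have hcos_num : 0 < 12 - 5 * x ^ 2 := by linarith
  have hcos : 0 < cos x := (div_pos hcos_num (by positivity)).trans_le
    (twelve_sub_div_twelve_add_le_cos x)
  have hden : 0 < 28 - 4 * x ^ 2 := by linarith
  have hnum : 0 < 28 - 11 * x ^ 2 := by linarith
  have hdiff : 2 - (28 + 3 * x ^ 2) / (28 - 4 * x ^ 2) =
      (28 - 11 * x ^ 2) / (28 - 4 * x ^ 2) := by
    rw [eq_div_iff hden.ne', sub_mul, div_mul_cancel₀ _ hden.ne']
    ring
  have hcube : ((28 + 3 * x ^ 2) / (28 - 4 * x ^ 2)) ^ 2 < (x / sin x) ^ 3 :=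
    (lt_rpow_iff_pow_lt_pow (by positivity) (by positivity) two_ne_zero (by norm_num)).1
      (div_lt_div_sin_rpow hx hx2)
  have htan : x / tan x = x / sin x * cos x := by
    rw [tan_eq_sin_div_cos, div_div_eq_mul_div, mul_div_right_comm]
  rw [hdiff, htan, lt_rpow_iff_pow_lt_pow (m := 3) (n := 4) (by positivity) (by positivity)
    four_ne_zero (by norm_num)]
  calc ((28 - 11 * x ^ 2) / (28 - 4 * x ^ 2)) ^ 4
      < ((28 + 3 * x ^ 2) / (28 - 4 * x ^ 2)) ^ 2 *
          ((12 - 5 * x ^ 2) / (12 + x ^ 2)) ^ 3 := by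
        rw [div_pow, div_pow, div_pow, div_mul_div_comm,
          div_lt_div_iff₀ (by positivity) (by positivity)]
        have := mul_lt_mul_of_pos_right (pow_four_mul_pow_three_lt (sq_pos_of_pos hx) hx2)
          (pow_pos hden 2)
        linarith
    _ ≤ (x / sin x) ^ 3 * cos x ^ 3 := by
        gcongr
        exact twelve_sub_div_twelve_add_le_cos x
    _ = (x / sin x * cos x) ^ 3 := (mul_pow _ _ 3).symm

theorem two_lt_div_sin_rpow_add_div_tan_rpow_of_sq_le_two {x : ℝ} (hx : 0 < x)
    (hx2 : x ^ 2 ≤ 2) :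
    2 < (x / sin x) ^ (2 * (3 / 4) : ℝ) + (x / tan x) ^ (3 / 4 : ℝ) := by
  linarith [div_lt_div_sin_rpow hx hx2, two_sub_div_lt_div_tan_rpow hx hx2]

/-- The critical exponent `q`, characterised by `(π / 2) ^ (2 * q) = 2`: the threshold
for the second inequality of the chain. -/
noncomputable def wilkerExponent : ℝ := Real.log 2 / (2 * (Real.log π - Real.log 2))

theorem wilkerExponent_eq : wilkerExponent = Real.log 2 / (2 * Real.log (π / 2)) := by
  rw [wilkerExponent, Real.log_div pi_ne_zero two_ne_zero]

theorem log_pi_div_two_pos : 0 < Real.log (π / 2) :=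
  Real.log_pos (by linarith [pi_gt_three])

theorem wilkerExponent_le_iff {p : ℝ} : wilkerExponent ≤ p ↔ 2 ≤ (π / 2) ^ (2 * p) := by
  have := log_pi_div_two_pos
  rw [wilkerExponent_eq, div_le_iff₀ (by positivity), le_rpow_iff_log_le two_pos pi_div_two_pos,
    mul_left_comm, mul_assoc]

theorem le_wilkerExponent_iff {p : ℝ} : p ≤ wilkerExponent ↔ (π / 2) ^ (2 * p) ≤ 2 := by
  have := log_pi_div_two_pos
  rw [wilkerExponent_eq, le_div_iff₀ (by positivity), rpow_le_iff_le_log pi_div_two_pos two_pos,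
    mul_left_comm, mul_assoc]

theorem pi_div_two_rpow_wilkerExponent : (π / 2) ^ (2 * wilkerExponent) = 2 :=
  le_antisymm (le_wilkerExponent_iff.1 le_rfl) (wilkerExponent_le_iff.1 le_rfl)

theorem three_div_four_le_wilkerExponent : 3 / 4 ≤ wilkerExponent := by
  rw [le_wilkerExponent_iff, ← not_lt,
    lt_rpow_iff_pow_lt_pow (m := 3) (n := 2) two_pos.le (by positivity) two_ne_zero (by norm_num),
    not_lt]
  calc (π / 2) ^ 3 ≤ (3.15 / 2) ^ 3 := by
        gcongr
        exact pi_lt_d2.le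
    _ ≤ 2 ^ 2 := by norm_num

theorem wilkerExponent_le_ten_div_thirteen : wilkerExponent ≤ 10 / 13 := by
  rw [wilkerExponent_le_iff]
  refine ((lt_rpow_iff_pow_lt_pow (m := 20) (n := 13) two_pos.le (by positivity) (by norm_num)
    (by norm_num)).2 ?_).le
  calc (2 : ℝ) ^ 13 < (3.1415 / 2) ^ 20 := by norm_num
    _ ≤ (π / 2) ^ 20 := by
        gcongr
        exact pi_gt_d4.le

theorem two_mul_one_add_le_div_sin_rpow {x : ℝ} (hx : 0 < x) (hx' : x < π) :
    2 * (1 + 2 * wilkerExponent * (x / (π / 2) - 1)) ≤ (x / sin x) ^ (2 * wilkerExponent) := by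
  have hq := three_div_four_le_wilkerExponent
  calc 2 * (1 + 2 * wilkerExponent * (x / (π / 2) - 1)) ≤ x ^ (2 * wilkerExponent) := by
        simpa only [pi_div_two_rpow_wilkerExponent] using
          rpow_mul_one_add_le_rpow (p := 2 * wilkerExponent) pi_div_two_pos hx.le (by linarith)
    _ ≤ (x / sin x) ^ (2 * wilkerExponent) := by
        gcongr
        exact le_div_self hx.le (sin_pos_of_pos_of_lt_pi hx hx') (sin_le_one x)

theorem mul_pi_div_two_sub_lt_div_tan {x : ℝ} (hx : 0 < x) (hx' : x < π / 2) :
    x * (π / 2 - x) < x / tan x := by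
  rw [div_eq_mul_inv x (tan x), ← tan_pi_div_two_sub]
  gcongr
  exact lt_tan (by linarith) (by linarith)

theorem mul_lt_mul_rpow_of_two_le_sq {x y : ℝ} (hx2 : 2 ≤ x ^ 2) (hx : 0 < x) (hy : 0 < y)
    (hy' : y < 0.16) : 1.96 * y < (x * y) ^ (10 / 13 : ℝ) := by
  rw [lt_rpow_iff_pow_lt_pow (m := 10) (n := 13) (by positivity) (by positivity) (by norm_num)
    (by norm_num)]
  calc (1.96 * y) ^ 13 = 1.96 ^ 13 * y ^ 3 * y ^ 10 := by ring
    _ < 2 ^ 5 * y ^ 10 := by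
        gcongr
        calc 1.96 ^ 13 * y ^ 3 < 1.96 ^ 13 * (0.16 : ℝ) ^ 3 := by gcongr
          _ < 2 ^ 5 := by norm_num
    _ ≤ (x ^ 2) ^ 5 * y ^ 10 := by gcongr
    _ = (x * y) ^ 10 := by ring

theorem two_lt_div_sin_rpow_add_div_tan_rpow_of_two_le_sq {x : ℝ} (hx : 0 < x)
    (hx' : x < π / 2) (hx2 : 2 ≤ x ^ 2) :
    2 < (x / sin x) ^ (2 * wilkerExponent) + (x / tan x) ^ wilkerExponent := by
  have hq := three_div_four_le_wilkerExponent
  have hq' := wilkerExponent_le_ten_div_thirteen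
  have hπ := pi_gt_d4
  have hπ' := pi_lt_d4
  obtain ⟨y, hxy⟩ : ∃ y, x = π / 2 - y := ⟨π / 2 - x, by ring⟩
  have hy : 0 < y := by linarith
  have hy' : y < 0.16 := by nlinarith
  have hsin_term := two_mul_one_add_le_div_sin_rpow hx (by linarith)
  have htan_term : 1.96 * y < (x / tan x) ^ wilkerExponent :=
    calc 1.96 * y < (x * y) ^ (10 / 13 : ℝ) := mul_lt_mul_rpow_of_two_le_sq hx2 hx hy hy'
      _ ≤ (x * y) ^ wilkerExponent :=
          rpow_le_rpow_of_exponent_ge (by positivity) (by nlinarith) hq'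
      _ ≤ (x / tan x) ^ wilkerExponent := by
          gcongr
          simpa [hxy] using (mul_pi_div_two_sub_lt_div_tan hx hx').le
  have hloss : 2 * (1 + 2 * wilkerExponent * (x / (π / 2) - 1)) =
      2 - 8 * wilkerExponent / π * y := by
    rw [hxy]
    field_simp
    ring
  have hslope : 8 * wilkerExponent / π ≤ 1.96 := by
    rw [div_le_iff₀ pi_pos]
    linarith
  linarith [mul_le_mul_of_nonneg_right hslope hy.le]

theorem two_lt_div_sin_rpow_add_div_tan_rpow {x p : ℝ} (hx : 0 < x) (hx' : x < π / 2)
    (hp : wilkerExponent ≤ p) : 2 < (x / sin x) ^ (2 * p) + (x / tan x) ^ p := by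
  have hq := three_div_four_le_wilkerExponent
  have hsin : 0 < sin x := sin_pos_of_pos_of_lt_pi hx (by linarith)
  have htan : 0 < tan x := tan_pos_of_pos_of_lt_pi_div_two hx hx'
  have raise_exponent {q : ℝ} (hq : 0 < q) (hqp : q ≤ p)
      (h : 2 < (x / sin x) ^ (2 * q) + (x / tan x) ^ q) :
      2 < (x / sin x) ^ (2 * p) + (x / tan x) ^ p := by
    have hx_sin : 0 ≤ x / sin x := by positivity
    rw [rpow_mul hx_sin] at h ⊢
    exact two_lt_rpow_add_rpow_of_le (by positivity) (by positivity) hq hqp h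
  rcases le_total (x ^ 2) 2 with hx2 | hx2
  · exact raise_exponent (by norm_num) (hq.trans hp)
      (two_lt_div_sin_rpow_add_div_tan_rpow_of_sq_le_two hx hx2)
  · exact raise_exponent (by linarith) hp
      (two_lt_div_sin_rpow_add_div_tan_rpow_of_two_le_sq hx hx' hx2)

open Filter Topology in
theorem tendsto_div_sin_rpow_add_div_tan_rpow {p : ℝ} (hp : 0 < p) :
    Tendsto (fun x ↦ (x / sin x) ^ (2 * p) + (x / tan x) ^ p) (𝓝[<] (π / 2))
      (𝓝 ((π / 2) ^ (2 * p))) := by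
  have hid : Tendsto (fun x : ℝ ↦ x) (𝓝[<] (π / 2)) (𝓝 (π / 2)) := nhdsWithin_le_nhds
  have hsin : Tendsto (fun x ↦ x / sin x) (𝓝[<] (π / 2)) (𝓝 (π / 2)) := by
    simpa [Pi.div_def] using hid.div (continuous_sin.continuousWithinAt (x := π / 2)) (by simp)
  have htan : Tendsto (fun x ↦ x / tan x) (𝓝[<] (π / 2)) (𝓝 0) :=
    hid.div_atTop tendsto_tan_pi_div_two
  simpa [hp.ne'] using (hsin.rpow_const (p := 2 * p) (.inr (by positivity))).add
    (htan.rpow_const (.inr hp.le))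

theorem wilker_chain_zhu_trig (p : ℝ) (hp : p ≠ 0) :
    (∀ x ∈ Ioo (0 : ℝ) (π / 2),
        (sin x / x) ^ (2 * p) + (tan x / x) ^ p >
          (x / sin x) ^ (2 * p) + (x / tan x) ^ p ∧
        (x / sin x) ^ (2 * p) + (x / tan x) ^ p > 2) ↔
      p ≥ Real.log 2 / (2 * (Real.log π - Real.log 2)) := by
  change _ ↔ wilkerExponent ≤ p
  constructor
  · intro h
    have h1 : 1 < π / 2 := by linarith [pi_gt_three]
    have hp_pos : 0 < p :=
      (rpow_add_rpow_lt_sin_div_rpow_add_tan_div_rpow_iff one_pos h1).1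
        (h 1 ⟨one_pos, h1⟩).1
    rw [wilkerExponent_le_iff]
    refine ge_of_tendsto (tendsto_div_sin_rpow_add_div_tan_rpow hp_pos) ?_
    filter_upwards [Ioo_mem_nhdsLT pi_div_two_pos] with x hx using (h x hx).2.le
  · intro hqp x ⟨hx, hx'⟩
    have hp_pos : 0 < p := by linarith [three_div_four_le_wilkerExponent]
    exact ⟨(rpow_add_rpow_lt_sin_div_rpow_add_tan_div_rpow_iff hx hx').2 hp_pos,
      two_lt_div_sin_rpow_add_div_tan_rpow hx hx' hqp⟩
end

section
/- Fix a real number k ≥ 1 and a nonzero real number p. The chain of inequalities (k/(k+2))·(sinh(x)/x)^(k·p) + (2/(k+2))·(tanh(x)/x)^p > (2/(k+2))·(x/sinh(x))^(k·p) + (k/(k+2))·(x/tanh(x))^p > 1 holds for every x ∈ (0, ∞) if and only if k ≥ 2 and p ≥ 12/(5(k+2)). -/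
open Real Set

open Filter Topology Asymptotics
open scoped Nat

/-!
Write `s x = log (sinh x / x)` and `t x = log (x / tanh x)`. As `u ↦ k * exp u - 2 * exp (-u)`
increases, the first inequality of the chain at `x` says `p * t < k * p * s`; the second one says
`k + 2 < 2 * exp (-(k * p * s)) + k * exp (p * t)`.

For the second inequality it suffices to compare derivatives, which amounts to
`2 * s' < exp (k * p * s + p * t) * t'`. The doubling formula gives `2 * s + t = s (2 * x)`, and
`2 * s' / t'` is an explicit function of `2 * x` whose logarithm is less than `3 / 5 * s (2 * x)`:
the derivative of the difference is positive because its numerator has a power series with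
nonnegative coefficients. For `2 ≤ k` and `12 / (5 * (k + 2)) ≤ p` the bound `t < 2 * s` then gives
`3 / 5 * (2 * s + t) ≤ k * p * s + p * t`.

Conversely, `t` grows logarithmically and `s` linearly, so `p * t < k * p * s` for large `x` forces
`0 < p`. As `x → 0`, `s ~ x ^ 2 / 6` and `t ~ x ^ 2 / 3` force `2 ≤ k`, and the fourth-order terms
of the second inequality, with `2 * s - t ~ x ^ 4 / 15`, force `1 / 15 ≤ k * p / 36 + p / 18`.
-/

theorem lt_of_hasDerivAt_lt {f g f' g' : ℝ → ℝ} {a x : ℝ} (hax : a < x)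
    (hf : ContinuousOn f (Ici a)) (hg : ContinuousOn g (Ici a)) (hfg : f a ≤ g a)
    (hf' : ∀ y, a < y → HasDerivAt f (f' y) y) (hg' : ∀ y, a < y → HasDerivAt g (g' y) y)
    (hlt : ∀ y, a < y → f' y < g' y) : f x < g x := by
  have hmono : StrictMonoOn (g - f) (Ici a) := by
    refine strictMonoOn_of_hasDerivWithinAt_pos (f' := g' - f') (convex_Ici a) (hg.sub hf) ?_ ?_ <;>
      rw [interior_Ici] <;> intro y hy
    · exact ((hg' y hy).sub (hf' y hy)).hasDerivWithinAt
    · exact sub_pos.2 (hlt y hy)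
  have := hmono self_mem_Ici hax.le hax
  simp only [Pi.sub_apply] at this
  linarith

theorem exp_lt_one_add_add_sq_mul_exp {u : ℝ} (hu : 0 < u) :
    exp u < 1 + u + u ^ 2 / 2 * exp u := by
  refine lt_of_hasDerivAt_lt (f := exp) (g := fun u ↦ 1 + u + u ^ 2 / 2 * exp u) (f' := exp)
    (g' := fun u ↦ 1 + (u * exp u + u ^ 2 / 2 * exp u)) hu (by fun_prop) (by fun_prop) (by simp)
    (fun y _ ↦ hasDerivAt_exp y) (fun y _ ↦ ?_) (fun y hy ↦ ?_)
  · refine (((hasDerivAt_id y).const_add 1).add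
      ((((hasDerivAt_id y).pow 2).div_const 2).mul (hasDerivAt_exp y))).congr_deriv ?_
    simp
  · have : (1 - y) * exp y ≤ 1 := by
      have := mul_le_mul_of_nonneg_right (one_sub_le_exp_neg y) (exp_pos y).le
      rwa [← exp_add, neg_add_cancel, exp_zero] at this
    have : 0 < y ^ 2 / 2 * exp y := by positivity
    linarith

theorem exp_neg_lt_one_sub_add_sq {u : ℝ} (hu : 0 < u) : exp (-u) < 1 - u + u ^ 2 / 2 := by
  refine lt_of_hasDerivAt_lt (f := fun u ↦ exp (-u)) (g := fun u ↦ 1 - u + u ^ 2 / 2)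
    (f' := fun u ↦ -exp (-u)) (g' := fun u ↦ -1 + u) hu (by fun_prop) (by fun_prop) (by simp)
    (fun y _ ↦ ?_) (fun y _ ↦ ?_) (fun y hy ↦ ?_)
  · simpa using (hasDerivAt_neg y).exp
  · refine (((hasDerivAt_id y).const_sub 1).add
      (((hasDerivAt_id y).pow 2).div_const 2)).congr_deriv ?_
    simp
  · linarith [one_sub_lt_exp_neg hy.ne']

/-! ### Power series of hyperbolic expressions -/

theorem descFactorial_mul_pow_div_factorial (n k : ℕ) (x : ℝ) :
    (n + k).descFactorial k * (x ^ (n + k) / (n + k)!) = x ^ k * (x ^ n / n !) := by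
  have h : (n + k)! = n ! * (n + k).descFactorial k := by
    simpa using (Nat.factorial_mul_descFactorial (Nat.le_add_left k n)).symm
  have : ((n + k).descFactorial k : ℝ) ≠ 0 := by
    exact_mod_cast (Nat.descFactorial_pos.2 (Nat.le_add_left k n)).ne'
  rw [h]
  push_cast
  field_simp
  ring

theorem hasSum_pow_mul_sinh (j : ℕ) (x : ℝ) :
    HasSum (fun m : ℕ ↦ (2 * m + 1).descFactorial (2 * j) * (x ^ (2 * m + 1) / (2 * m + 1)!))
      (x ^ (2 * j) * sinh x) := by
  rw [← hasSum_nat_add_iff' j, Finset.sum_eq_zero, sub_zero]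
  · refine ((hasSum_sinh x).mul_left (x ^ (2 * j))).congr_fun fun m ↦ ?_
    rw [← descFactorial_mul_pow_div_factorial, show 2 * (m + j) + 1 = 2 * m + 1 + 2 * j by ring]
  · intro i hi
    rw [Nat.descFactorial_of_lt (by grind), Nat.cast_zero, zero_mul]

theorem hasSum_pow_mul_cosh (j : ℕ) (x : ℝ) :
    HasSum (fun m : ℕ ↦ (2 * m + 1).descFactorial (2 * j + 1) * (x ^ (2 * m + 1) / (2 * m + 1)!))
      (x ^ (2 * j + 1) * cosh x) := by
  rw [← hasSum_nat_add_iff' j, Finset.sum_eq_zero, sub_zero]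
  · refine ((hasSum_cosh x).mul_left (x ^ (2 * j + 1))).congr_fun fun m ↦ ?_
    rw [← descFactorial_mul_pow_div_factorial, show 2 * (m + j) + 1 = 2 * m + (2 * j + 1) by ring]
  · intro i hi
    rw [Nat.descFactorial_of_lt (by grind), Nat.cast_zero, zero_mul]

theorem hasSum_sinh_add_cosh (a b c d x : ℝ) :
    HasSum (fun m : ℕ ↦ (a + b * (2 * m + 1) + c * ((2 * m + 1) * (2 * m)) +
        d * ((2 * m + 1) * (2 * m) * (2 * m - 1))) * (x ^ (2 * m + 1) / (2 * m + 1)!))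
      (a * sinh x + b * (x * cosh x) + c * (x ^ 2 * sinh x) + d * (x ^ 3 * cosh x)) := by
  have h := ((((hasSum_pow_mul_sinh 0 x).mul_left a).add ((hasSum_pow_mul_cosh 0 x).mul_left b)).add
    ((hasSum_pow_mul_sinh 1 x).mul_left c)).add ((hasSum_pow_mul_cosh 1 x).mul_left d)
  simp only [← descPochhammer_eval_eq_descFactorial ℝ, descPochhammer_succ_eval,
    descPochhammer_zero, Polynomial.eval_one, mul_zero, mul_one, zero_add, Nat.reduceAdd, pow_zero,
    pow_one, one_mul] at h
  refine h.congr_fun fun m ↦ ?_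
  push_cast
  ring

theorem sinh_lt_self_mul_cosh {x : ℝ} (hx : 0 < x) : sinh x < x * cosh x := by
  have h := le_hasSum (hasSum_sinh_add_cosh (-1) 1 0 0 x) 1 fun m _ ↦ by
    ring_nf; positivity
  norm_num [Nat.factorial] at h
  have : 0 < x ^ 3 := by positivity
  linarith

theorem three_mul_self_mul_cosh_lt {x : ℝ} (hx : 0 < x) :
    3 * (x * cosh x) < (x ^ 2 + 3) * sinh x := by
  have h := le_hasSum (hasSum_sinh_add_cosh 3 (-3) 1 0 x) 2 fun m _ ↦ by
    have : 0 ≤ (m * (m - 1) : ℝ) := by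
      rcases m with _ | m
      · simp
      · push_cast; ring_nf; positivity
    refine mul_nonneg ?_ (by positivity)
    linarith
  norm_num [Nat.factorial] at h
  have : 0 < x ^ 5 := by positivity
  linarith

theorem pow_five_div_sixty_le {x : ℝ} (hx : 0 < x) :
    x ^ 5 / 60 ≤ x * (cosh x + 2) - 3 * sinh x := by
  have h := sum_le_hasSum {0, 2} (fun m hm ↦ ?_) (hasSum_sinh_add_cosh (-3) 1 0 0 x)
  · norm_num [Nat.factorial] at h
    linarith
  · have : (1 : ℝ) ≤ m := by
      norm_cast; grind
    refine mul_nonneg ?_ (by positivity)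
    linarith

/-! ### The logarithms of `sinh x / x` and `x / tanh x` -/

/-- The function `x ↦ log (sinh x / x)`; the conventions `0 / 0 = 0` and `log 0 = 0` give it the
value `0` at `0`, which is its continuous extension. -/
noncomputable def logSinhc (x : ℝ) : ℝ := log (sinh x / x)

/-- The function `x ↦ log (x / tanh x)`; as for `logSinhc`, its value at `0` is its continuous
extension. -/
noncomputable def logXCoth (x : ℝ) : ℝ := log (x / tanh x)

@[simp]
theorem logSinhc_zero : logSinhc 0 = 0 := by simp [logSinhc]

theorem logXCoth_eq (x : ℝ) : logXCoth x = log (cosh x) - logSinhc x := by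
  obtain rfl | hx := eq_or_ne x 0
  · simp [logXCoth]
  · have hsinh : sinh x ≠ 0 := sinh_ne_zero.2 hx
    have hcosh := (cosh_pos x).ne'
    rw [logXCoth, logSinhc, tanh_eq_sinh_div_cosh, ← log_div hcosh (div_ne_zero hsinh hx)]
    field_simp

theorem logSinhc_two_mul (x : ℝ) : logSinhc (2 * x) = 2 * logSinhc x + logXCoth x := by
  obtain rfl | hx := eq_or_ne x 0
  · simp [logXCoth_eq]
  · have hsinh : sinh x ≠ 0 := sinh_ne_zero.2 hx
    have hcosh := (cosh_pos x).ne'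
    have hmul : sinh (2 * x) / (2 * x) = sinh x / x * cosh x := by
      rw [sinh_two_mul]; field_simp
    rw [logXCoth_eq, logSinhc, hmul, log_mul (by positivity) hcosh, ← logSinhc]
    ring

theorem hasDerivAt_log_cosh (x : ℝ) : HasDerivAt (fun x ↦ log (cosh x)) (sinh x / cosh x) x :=
  (hasDerivAt_cosh x).log (cosh_pos x).ne'

theorem continuous_log_cosh : Continuous fun x ↦ log (cosh x) :=
  continuous_iff_continuousAt.2 fun x ↦ (hasDerivAt_log_cosh x).continuousAt

theorem hasDerivAt_logSinhc {x : ℝ} (hx : x ≠ 0) :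
    HasDerivAt logSinhc ((x * cosh x - sinh x) / (x * sinh x)) x := by
  refine (((hasDerivAt_sinh x).div (hasDerivAt_id x) hx).log (by simp [hx])).congr_deriv ?_
  simp only [Pi.div_apply, id_eq]
  field_simp

theorem hasDerivAt_logXCoth {x : ℝ} (hx : x ≠ 0) :
    HasDerivAt logXCoth ((sinh x * cosh x - x) / (x * sinh x * cosh x)) x := by
  rw [funext logXCoth_eq]
  refine ((hasDerivAt_log_cosh x).sub (hasDerivAt_logSinhc hx)).congr_deriv ?_
  field_simp
  linear_combination (-x) * cosh_sq x

theorem continuous_logSinhc : Continuous logSinhc := by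
  refine continuous_iff_continuousAt.2 fun x ↦ ?_
  obtain rfl | hx := eq_or_ne x 0
  · have hslope : Tendsto (fun x ↦ sinh x / x) (𝓝[≠] 0) (𝓝 1) := by
      simpa [slope_fun_def_field] using hasDerivAt_iff_tendsto_slope.1 (hasDerivAt_sinh 0)
    rw [continuousAt_iff_punctured_nhds, logSinhc_zero]
    have hlog := hslope.log one_ne_zero
    rw [log_one] at hlog
    exact hlog
  · exact (hasDerivAt_logSinhc hx).continuousAt

theorem continuous_logXCoth : Continuous logXCoth := by
  rw [funext logXCoth_eq]
  exact continuous_log_cosh.sub continuous_logSinhc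

theorem logSinhc_pos {x : ℝ} (hx : 0 < x) : 0 < logSinhc x :=
  log_pos ((one_lt_div hx).2 (self_lt_sinh_iff.2 hx))

theorem logXCoth_pos {x : ℝ} (hx : 0 < x) : 0 < logXCoth x := by
  rw [logXCoth_eq, logSinhc, sub_pos]
  refine log_lt_log (by positivity) ?_
  rw [div_lt_iff₀ hx, mul_comm]
  exact sinh_lt_self_mul_cosh hx

theorem logSinhc_lt_sq_div_six {x : ℝ} (hx : 0 < x) : logSinhc x < x ^ 2 / 6 := by
  refine lt_of_hasDerivAt_lt (g := fun x ↦ x ^ 2 / 6) (g' := fun x ↦ x / 3) hx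
    continuous_logSinhc.continuousOn (by fun_prop) (by simp)
    (fun y hy ↦ hasDerivAt_logSinhc hy.ne') (fun y _ ↦ ?_) (fun y hy ↦ ?_)
  · refine (((hasDerivAt_id y).pow 2).div_const 6).congr_deriv ?_
    simp only [id_eq]; ring
  · rw [div_lt_iff₀ (mul_pos hy (sinh_pos_iff.2 hy))]
    linarith [three_mul_self_mul_cosh_lt hy]

theorem sq_div_two_mul_cosh_lt_log_cosh {x : ℝ} (hx : 0 < x) :
    x ^ 2 / (2 * cosh x) < log (cosh x) := by
  refine lt_of_hasDerivAt_lt (f := fun x ↦ x ^ 2 / (2 * cosh x)) hx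
    (ContinuousOn.div (by fun_prop) (by fun_prop) fun y _ ↦ by positivity)
    continuous_log_cosh.continuousOn (by simp)
    (fun y _ ↦ ((hasDerivAt_id y).pow 2).div ((hasDerivAt_cosh y).const_mul 2) (by positivity))
    (fun y _ ↦ hasDerivAt_log_cosh y) (fun y hy ↦ ?_)
  have hsinh : y < sinh y := self_lt_sinh_iff.2 hy
  simp only [id_eq, Nat.cast_ofNat, Nat.add_one_sub_one, pow_one, mul_one, Pi.pow_apply]
  calc (2 * y * (2 * cosh y) - y ^ 2 * (2 * sinh y)) / (2 * cosh y) ^ 2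
      ≤ 2 * y * (2 * cosh y) / (2 * cosh y) ^ 2 := by
        gcongr
        exact sub_le_self _ (by have := hy.trans hsinh; positivity)
    _ = y / cosh y := by field_simp
    _ < sinh y / cosh y := by gcongr

theorem hasDerivAt_two_mul_logSinhc_sub_logXCoth {x : ℝ} (hx : x ≠ 0) :
    HasDerivAt (fun x ↦ 2 * logSinhc x - logXCoth x)
      ((2 * x * (cosh (2 * x) + 2) - 3 * sinh (2 * x)) / (x * sinh (2 * x))) x := by
  refine (((hasDerivAt_logSinhc hx).const_mul 2).sub (hasDerivAt_logXCoth hx)).congr_deriv ?_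
  rw [sinh_two_mul, cosh_two_mul]
  field_simp
  linear_combination x * cosh_sq x

theorem pow_four_div_mul_cosh_lt {x : ℝ} (hx : 0 < x) :
    x ^ 4 / (15 * cosh (2 * x)) < 2 * logSinhc x - logXCoth x := by
  refine lt_of_hasDerivAt_lt (f := fun x ↦ x ^ 4 / (15 * cosh (2 * x)))
    (g := fun x ↦ 2 * logSinhc x - logXCoth x) hx
    (ContinuousOn.div (by fun_prop) (by fun_prop) fun y _ ↦ by positivity)
    ((continuous_logSinhc.const_mul 2).sub continuous_logXCoth).continuousOn
    (by simp [logXCoth_eq])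
    (fun y _ ↦ ((hasDerivAt_id y).pow 4).div
      ((((hasDerivAt_id y).const_mul 2).cosh).const_mul 15) (by positivity))
    (fun y hy ↦ hasDerivAt_two_mul_logSinhc_sub_logXCoth hy.ne') (fun y hy ↦ ?_)
  simp only [id_eq, Nat.cast_ofNat, Nat.add_one_sub_one, mul_one, Pi.pow_apply]
  calc (4 * y ^ 3 * (15 * cosh (2 * y)) - y ^ 4 * (15 * (sinh (2 * y) * 2)))
          / (15 * cosh (2 * y)) ^ 2
      ≤ 4 * y ^ 3 * (15 * cosh (2 * y)) / (15 * cosh (2 * y)) ^ 2 := by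
        gcongr
        exact sub_le_self _ (by positivity)
    _ = (2 * y) ^ 4 / (2 * y * cosh (2 * y)) / 30 := by field_simp; norm_num
    _ < (2 * y) ^ 4 / sinh (2 * y) / 30 := by
        gcongr
        exact sinh_lt_self_mul_cosh (by positivity)
    _ = (2 * y) ^ 5 / 60 / (y * sinh (2 * y)) := by field_simp; norm_num
    _ ≤ _ := by
        gcongr
        exact pow_five_div_sixty_le (by positivity)

theorem logXCoth_lt_two_mul_logSinhc {x : ℝ} (hx : 0 < x) : logXCoth x < 2 * logSinhc x := by
  have : 0 < x ^ 4 / (15 * cosh (2 * x)) := by positivity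
  linarith [pow_four_div_mul_cosh_lt hx]

/-! ### The ratio of the slopes -/

/-- Twice the quotient of the derivatives of `logSinhc` and `logXCoth` at `y / 2`. Its value at `0`
is the junk value `0 / 0 = 0` rather than the limit `1`, but `log 0 = log 1`, so
`fun y ↦ log (slopeRatio y)` is still continuous at `0` from the right. -/
noncomputable def slopeRatio (y : ℝ) : ℝ := (y + y * cosh y - 2 * sinh y) / (sinh y - y)

theorem sinh_sub_self_pos {y : ℝ} (hy : 0 < y) : 0 < sinh y - y :=
  sub_pos.2 (self_lt_sinh_iff.2 hy)

theorem sinh_sub_self_lt {y : ℝ} (hy : 0 < y) : sinh y - y < y + y * cosh y - 2 * sinh y := by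
  have := pow_five_div_sixty_le hy
  have : 0 < y ^ 5 := by positivity
  linarith

theorem lt_cosh_mul_sinh_sub_self {y : ℝ} (hy : 0 < y) :
    y + y * cosh y - 2 * sinh y < cosh y * (sinh y - y) := by
  suffices y + 2 * (y * cosh y) < cosh y * sinh y + 2 * sinh y by linarith
  refine lt_of_hasDerivAt_lt (f := fun y ↦ y + 2 * (y * cosh y))
    (g := fun y ↦ cosh y * sinh y + 2 * sinh y) hy (by fun_prop) (by fun_prop) (by simp)
    (fun z _ ↦ (hasDerivAt_id z).add
      (((hasDerivAt_id z).mul (hasDerivAt_cosh z)).const_mul 2))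
    (fun z _ ↦ ((hasDerivAt_cosh z).mul (hasDerivAt_sinh z)).add ((hasDerivAt_sinh z).const_mul 2))
    (fun z hz ↦ ?_)
  have hsinh : 0 < sinh z := sinh_pos_iff.2 hz
  have := mul_pos hsinh (sinh_sub_self_pos hz)
  simp only [id_eq]
  linarith [cosh_sq z]

theorem one_lt_slopeRatio {y : ℝ} (hy : 0 < y) : 1 < slopeRatio y :=
  (one_lt_div (sinh_sub_self_pos hy)).2 (sinh_sub_self_lt hy)

theorem slopeRatio_lt_cosh {y : ℝ} (hy : 0 < y) : slopeRatio y < cosh y :=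
  (div_lt_iff₀ (sinh_sub_self_pos hy)).2 (lt_cosh_mul_sinh_sub_self hy)

theorem tendsto_slopeRatio : Tendsto slopeRatio (𝓝[>] 0) (𝓝 1) := by
  have hcosh : Tendsto cosh (𝓝[>] 0) (𝓝 1) :=
    (continuous_cosh.tendsto' 0 1 cosh_zero).mono_left nhdsWithin_le_nhds
  refine tendsto_of_tendsto_of_tendsto_of_le_of_le' tendsto_const_nhds hcosh ?_ ?_
  · filter_upwards [self_mem_nhdsWithin] with y hy using (one_lt_slopeRatio hy).le
  · filter_upwards [self_mem_nhdsWithin] with y hy using (slopeRatio_lt_cosh hy).le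

theorem hasDerivAt_log_slopeRatio {y : ℝ} (hy : 0 < y) :
    HasDerivAt (fun y ↦ log (slopeRatio y))
      ((1 - cosh y + y * sinh y) / (y + y * cosh y - 2 * sinh y)
        - (cosh y - 1) / (sinh y - y)) y := by
  have hden := sinh_sub_self_pos hy
  have hnum := hden.trans (sinh_sub_self_lt hy)
  have hnum' : HasDerivAt (fun y ↦ y + y * cosh y - 2 * sinh y) (1 - cosh y + y * sinh y) y := by
    refine (((hasDerivAt_id y).add ((hasDerivAt_id y).mul (hasDerivAt_cosh y))).sub
      ((hasDerivAt_sinh y).const_mul 2)).congr_deriv ?_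
    simp only [id_eq]; ring
  refine ((hnum'.log hnum.ne').sub
    (((hasDerivAt_sinh y).sub (hasDerivAt_id y)).log hden.ne')).congr_of_eventuallyEq ?_
  filter_upwards [eventually_gt_nhds hy] with z hz
  have hden := sinh_sub_self_pos hz
  exact log_div (hden.trans (sinh_sub_self_lt hz)).ne' hden.ne'

theorem continuousOn_log_slopeRatio : ContinuousOn (fun y ↦ log (slopeRatio y)) (Ici 0) := by
  intro y hy
  obtain rfl | hy := eq_or_lt_of_le (mem_Ici.1 hy)
  · rw [← continuousWithinAt_Ioi_iff_Ici]
    simpa [ContinuousWithinAt, slopeRatio] using tendsto_slopeRatio.log one_ne_zero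
  · exact (hasDerivAt_log_slopeRatio hy).continuousAt.continuousWithinAt

/-- The numerator of the derivative of `3 / 5 * logSinhc - log ∘ slopeRatio`, over the denominator
`5 * (y * sinh y) * (sinh y - y) * (y + y * cosh y - 2 * sinh y)`. -/
noncomputable def slopeGap (y : ℝ) : ℝ :=
  3 * (y * cosh y - sinh y) * (sinh y - y) * (y + y * cosh y - 2 * sinh y)
    - 5 * y * sinh y * (cosh y * sinh y - sinh y + y * cosh y - y - y ^ 2 * sinh y)

/-- The coefficient of `y ^ (2 * m + 1) / (2 * m + 1)!` in the power series of `4 * slopeGap y`,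
up to its polynomial part `8 * y - 16 * y ^ 3`. -/
noncomputable def slopeGapCoeff (m : ℕ) : ℝ :=
  9 ^ m * ((2 * m + 1) ^ 2 - 15 * (2 * m + 1) + 18)
    + 4 ^ m * ((2 * m + 1) * ((2 * m + 1) ^ 2 + 4 * (2 * m + 1) - 13))
    + (-18 + 14 * (2 * m + 1) + 35 * ((2 * m + 1) * (2 * m))
      - 12 * ((2 * m + 1) * (2 * m) * (2 * m - 1)))

theorem slopeGapCoeff_pos {m : ℕ} (hm : 5 ≤ m) : 0 < slopeGapCoeff m := by
  obtain hm7 | hm7 := Nat.lt_or_ge m 7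
  · interval_cases m <;> norm_num [slopeGapCoeff]
  obtain ⟨z, hz, hmz⟩ : ∃ z : ℝ, 0 ≤ z ∧ (m : ℝ) = z + 7 :=
    ⟨m - 7, sub_nonneg.2 (by exact_mod_cast hm7), by ring⟩
  have hpow : (1024 : ℝ) ≤ 4 ^ m := by
    calc (1024 : ℝ) = 4 ^ 5 := by norm_num
      _ ≤ 4 ^ m := by gcongr; norm_num
  unfold slopeGapCoeff
  rw [hmz]
  calc 0 < 0 + 1024 * ((2 * (z + 7) + 1) * ((2 * (z + 7) + 1) ^ 2 + 4 * (2 * (z + 7) + 1) - 13))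
        + (-18 + 14 * (2 * (z + 7) + 1) + 35 * ((2 * (z + 7) + 1) * (2 * (z + 7)))
          - 12 * ((2 * (z + 7) + 1) * (2 * (z + 7)) * (2 * (z + 7) - 1))) := by
        ring_nf; positivity
    _ ≤ _ := by
        gcongr
        · refine mul_nonneg (by positivity) ?_
          ring_nf; positivity
        · ring_nf; positivity

theorem slopeGapCoeff_nonneg {m : ℕ} (hm : 2 ≤ m) : 0 ≤ slopeGapCoeff m := by
  obtain hm5 | hm5 := Nat.lt_or_ge m 5
  · interval_cases m <;> norm_num [slopeGapCoeff]
  · exact (slopeGapCoeff_pos hm5).le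

theorem four_mul_slopeGap (y : ℝ) :
    4 * slopeGap y - 8 * y + 16 * y ^ 3 =
      6 * sinh (3 * y) + -14 / 3 * (3 * y * cosh (3 * y)) + 1 / 3 * ((3 * y) ^ 2 * sinh (3 * y))
        + 0 * ((3 * y) ^ 3 * cosh (3 * y))
      + (0 * sinh (2 * y) + -4 * (2 * y * cosh (2 * y)) + 7 / 2 * ((2 * y) ^ 2 * sinh (2 * y))
        + 1 / 2 * ((2 * y) ^ 3 * cosh (2 * y)))
      + (-18 * sinh y + 14 * (y * cosh y) + 35 * (y ^ 2 * sinh y) + -12 * (y ^ 3 * cosh y)) := by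
  rw [slopeGap, sinh_three_mul, cosh_three_mul, sinh_two_mul, cosh_two_mul]
  have hcosh : cosh y ^ 3 = (sinh y ^ 2 + 1) * cosh y := by rw [← cosh_sq]; ring
  ring_nf
  simp only [hcosh, cosh_sq]
  ring

theorem hasSum_slopeGap (y : ℝ) :
    HasSum (fun m : ℕ ↦ slopeGapCoeff m * (y ^ (2 * m + 1) / (2 * m + 1)!))
      (4 * slopeGap y - 8 * y + 16 * y ^ 3) := by
  rw [four_mul_slopeGap]
  refine (((hasSum_sinh_add_cosh 6 (-14 / 3) (1 / 3) 0 (3 * y)).add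
    (hasSum_sinh_add_cosh 0 (-4) (7 / 2) (1 / 2) (2 * y))).add
    (hasSum_sinh_add_cosh (-18) 14 35 (-12) y)).congr_fun fun m ↦ ?_
  have h9 : (3 : ℝ) ^ (2 * m + 1) = 3 * 9 ^ m := by rw [pow_succ, pow_mul]; norm_num [mul_comm]
  have h4 : (2 : ℝ) ^ (2 * m + 1) = 2 * 4 ^ m := by rw [pow_succ, pow_mul]; norm_num [mul_comm]
  rw [mul_pow, mul_pow, h9, h4, slopeGapCoeff]
  ring

theorem slopeGap_pos {y : ℝ} (hy : 0 < y) : 0 < slopeGap y := by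
  have hle := sum_le_hasSum {0, 1, 5} (fun m hm ↦ ?_) (hasSum_slopeGap y)
  · have h0 : slopeGapCoeff 0 = -8 := by norm_num [slopeGapCoeff]
    have h1 : slopeGapCoeff 1 = 96 := by norm_num [slopeGapCoeff]
    have h5 : 0 < slopeGapCoeff 5 * (y ^ (2 * 5 + 1) / (2 * 5 + 1)!) :=
      mul_pos (slopeGapCoeff_pos le_rfl) (by positivity)
    rw [Finset.sum_insert (by simp), Finset.sum_pair (by simp), h0, h1] at hle
    norm_num [Nat.factorial] at hle h5
    linarith
  · exact mul_nonneg (slopeGapCoeff_nonneg (by grind)) (by positivity)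

theorem log_slopeRatio_lt {y : ℝ} (hy : 0 < y) : log (slopeRatio y) < 3 / 5 * logSinhc y := by
  refine lt_of_hasDerivAt_lt (g := fun y ↦ 3 / 5 * logSinhc y) hy continuousOn_log_slopeRatio
    (continuous_logSinhc.const_mul _).continuousOn (by simp [slopeRatio])
    (fun z hz ↦ hasDerivAt_log_slopeRatio hz)
    (fun z hz ↦ (hasDerivAt_logSinhc hz.ne').const_mul _) (fun z hz ↦ ?_)
  have hden := sinh_sub_self_pos hz
  have hnum := hden.trans (sinh_sub_self_lt hz)
  have hgap : slopeGap z = 3 * (z * cosh z - sinh z) * (sinh z - z) * (z + z * cosh z - 2 * sinh z)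
      - 5 * (z * sinh z) * ((1 - cosh z + z * sinh z) * (sinh z - z)
        - (z + z * cosh z - 2 * sinh z) * (cosh z - 1)) := by
    rw [slopeGap]
    linear_combination (-5 * z ^ 2 * sinh z) * cosh_sq z
  rw [div_sub_div _ _ hnum.ne' hden.ne', ← mul_div_assoc, div_lt_div_iff₀ (by positivity)
    (by positivity)]
  linarith [slopeGap_pos hz]

/-! ### The two inequalities of the chain -/

theorem strictMono_mul_exp_sub {a b : ℝ} (ha : 0 < a) (hb : 0 < b) :
    StrictMono fun u ↦ a * exp u - b * exp (-u) := fun u v huv ↦ by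
  dsimp only
  gcongr

theorem wilker_chain_iff {k p x : ℝ} (hk : 0 < k) (hx : 0 < x) :
    (k / (k + 2) * (sinh x / x) ^ (k * p) + 2 / (k + 2) * (tanh x / x) ^ p >
        2 / (k + 2) * (x / sinh x) ^ (k * p) + k / (k + 2) * (x / tanh x) ^ p ∧
      2 / (k + 2) * (x / sinh x) ^ (k * p) + k / (k + 2) * (x / tanh x) ^ p > 1) ↔
    (p * logXCoth x < k * p * logSinhc x ∧
      k + 2 < 2 * exp (-(k * p * logSinhc x)) + k * exp (p * logXCoth x)) := by
  have hS : 0 < sinh x / x := div_pos (sinh_pos_iff.2 hx) hx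
  have hT : 0 < x / tanh x := by
    rw [tanh_eq_sinh_div_cosh]
    exact div_pos hx (div_pos (sinh_pos_iff.2 hx) (cosh_pos x))
  rw [← inv_div (sinh x) x, ← inv_div x (tanh x), inv_rpow hS.le, inv_rpow hT.le,
    rpow_def_of_pos hS, rpow_def_of_pos hT, ← logSinhc, ← logXCoth, ← exp_neg, ← exp_neg,
    mul_comm (logSinhc x), mul_comm (logXCoth x)]
  refine and_congr ?_ ?_
  · rw [gt_iff_lt, ← (strictMono_mul_exp_sub hk two_pos).lt_iff_lt (a := p * logXCoth x)]
    field_simp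
    constructor <;> intro h <;> linarith
  · rw [gt_iff_lt]
    field_simp

theorem self_lt_sinh_mul_cosh {x : ℝ} (hx : 0 < x) : x < sinh x * cosh x := by
  linarith [self_lt_sinh_iff.2 (mul_pos two_pos hx), sinh_two_mul x]

theorem slopeRatio_two_mul (x : ℝ) :
    slopeRatio (2 * x) = 2 * cosh x * (x * cosh x - sinh x) / (sinh x * cosh x - x) := by
  rw [slopeRatio, sinh_two_mul, cosh_two_mul,
    ← mul_div_mul_left _ (sinh x * cosh x - x) two_ne_zero]
  congr 1
  · linear_combination (-2 * x) * cosh_sq x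
  · ring

theorem two_mul_deriv_logSinhc_lt {x : ℝ} (hx : 0 < x) :
    2 * ((x * cosh x - sinh x) / (x * sinh x)) <
      exp (3 / 5 * (2 * logSinhc x + logXCoth x)) *
        ((sinh x * cosh x - x) / (x * sinh x * cosh x)) := by
  have h2x : 0 < 2 * x := by positivity
  have hden : 0 < sinh x * cosh x - x := sub_pos.2 (self_lt_sinh_mul_cosh hx)
  have hratio : 2 * ((x * cosh x - sinh x) / (x * sinh x)) =
      slopeRatio (2 * x) * ((sinh x * cosh x - x) / (x * sinh x * cosh x)) := by
    rw [slopeRatio_two_mul, div_mul_div_cancel₀ hden.ne']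
    field_simp
  rw [hratio, ← logSinhc_two_mul]
  gcongr
  exact (log_lt_iff_lt_exp (one_pos.trans (one_lt_slopeRatio h2x))).1 (log_slopeRatio_lt h2x)

theorem three_fifths_mul_add_le {k p x : ℝ} (hk : 2 ≤ k) (hp : 12 / (5 * (k + 2)) ≤ p)
    (hx : 0 < x) :
    3 / 5 * (2 * logSinhc x + logXCoth x) ≤ p * (k * logSinhc x + logXCoth x) := by
  have hs := logSinhc_pos hx
  have ht := logXCoth_pos hx
  have hst := logXCoth_lt_two_mul_logSinhc hx
  calc 3 / 5 * (2 * logSinhc x + logXCoth x)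
      ≤ 12 / (5 * (k + 2)) * (k * logSinhc x + logXCoth x) := by
        rw [div_mul_eq_mul_div (12 : ℝ), le_div_iff₀ (by positivity)]
        linarith [mul_nonneg (sub_nonneg.2 hk) (sub_nonneg.2 hst.le)]
    _ ≤ p * (k * logSinhc x + logXCoth x) := by gcongr

theorem add_two_lt_exp_add_exp {k p x : ℝ} (hk : 2 ≤ k) (hp : 12 / (5 * (k + 2)) ≤ p)
    (hx : 0 < x) :
    k + 2 < 2 * exp (-(k * p * logSinhc x)) + k * exp (p * logXCoth x) := by
  have hp0 : 0 < p := lt_of_lt_of_le (by positivity) hp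
  refine lt_of_hasDerivAt_lt (f := fun _ ↦ k + 2)
    (g := fun x ↦ 2 * exp (-(k * p * logSinhc x)) + k * exp (p * logXCoth x)) hx
    continuousOn_const ?_ (by simp [logXCoth_eq, add_comm]) (fun y _ ↦ hasDerivAt_const y _)
    (fun y hy ↦ ((((hasDerivAt_logSinhc hy.ne').const_mul (k * p)).neg.exp).const_mul 2).add
      ((((hasDerivAt_logXCoth hy.ne').const_mul p).exp).const_mul k)) (fun y hy ↦ ?_)
  · exact ((((continuous_logSinhc.const_mul _).neg.rexp).const_mul 2).add
      (((continuous_logXCoth.const_mul _).rexp).const_mul k)).continuousOn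
  have hslope : 2 * ((y * cosh y - sinh y) / (y * sinh y)) <
      exp (p * logXCoth y + k * p * logSinhc y) *
        ((sinh y * cosh y - y) / (y * sinh y * cosh y)) := by
    refine (two_mul_deriv_logSinhc_lt hy).trans_le ?_
    have : 0 < sinh y * cosh y - y := sub_pos.2 (self_lt_sinh_mul_cosh hy)
    gcongr
    linarith [three_fifths_mul_add_le hk hp hy]
  have hexp : exp (p * logXCoth y) =
      exp (-(k * p * logSinhc y)) * exp (p * logXCoth y + k * p * logSinhc y) := by
    rw [← exp_add]; ring_nf
  have := mul_lt_mul_of_pos_left hslope (by positivity : 0 < k * p * exp (-(k * p * logSinhc y)))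
  simp only [Pi.neg_apply, hexp]
  linarith

theorem div_two_sub_log_two_le_logSinhc {x : ℝ} (hx : 0 < x) : x / 2 - log 2 ≤ logSinhc x := by
  rw [logSinhc, le_log_iff_exp_le (by positivity), exp_sub, exp_log two_pos,
    div_le_div_iff₀ two_pos hx]
  have hhalf : x / 2 ≤ sinh (x / 2) := self_le_sinh_iff.2 (by positivity)
  have hexp : exp (x / 2) ≤ 2 * cosh (x / 2) := by
    linarith [cosh_add_sinh (x / 2), sinh_lt_cosh (x / 2)]
  calc exp (x / 2) * x = x / 2 * exp (x / 2) * 2 := by ring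
    _ ≤ sinh (x / 2) * (2 * cosh (x / 2)) * 2 := by gcongr
    _ = sinh x * 2 := by
        rw [← mul_assoc, mul_comm (sinh _), ← sinh_two_mul, mul_div_cancel₀ x two_ne_zero]

theorem logXCoth_le_log_one_add {x : ℝ} (hx : 0 < x) : logXCoth x ≤ log (1 + x) := by
  have hsinh : 0 < sinh x := sinh_pos_iff.2 hx
  have hle : x * (cosh x - sinh x) ≤ sinh x := by
    rw [cosh_sub_sinh]
    calc x * exp (-x) ≤ x * 1 := by gcongr; exact exp_le_one_iff.2 (by linarith)
      _ ≤ sinh x := by rw [mul_one]; exact self_le_sinh_iff.2 hx.le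
  rw [logXCoth, tanh_eq_sinh_div_cosh]
  gcongr
  rw [div_div_eq_mul_div, div_le_iff₀ hsinh]
  linarith

theorem logXCoth_isLittleO_logSinhc : logXCoth =o[atTop] logSinhc := by
  have hlog : logXCoth =O[atTop] fun x ↦ log (1 + x) := by
    refine .of_norm_eventuallyLE ?_
    filter_upwards [eventually_gt_atTop 0] with x hx
    rw [norm_of_nonneg (logXCoth_pos hx).le]
    exact logXCoth_le_log_one_add hx
  have hlin : (fun x : ℝ ↦ 1 + x) =O[atTop] logSinhc := by
    refine .of_bound 8 ?_
    filter_upwards [eventually_ge_atTop 3] with x hx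
    have hx0 : 0 < x := by linarith
    rw [norm_of_nonneg (by positivity), norm_of_nonneg (logSinhc_pos hx0).le]
    linarith [div_two_sub_log_two_le_logSinhc hx0, log_two_lt_d9]
  exact (hlog.trans_isLittleO (isLittleO_log_id_atTop.comp_tendsto
    (tendsto_atTop_add_const_left _ 1 tendsto_id))).trans_isBigO hlin

theorem exists_logXCoth_le_mul_logSinhc {c : ℝ} (hc : 0 < c) :
    ∃ x, 0 < x ∧ logXCoth x ≤ c * logSinhc x := by
  obtain ⟨x, hle, hx⟩ :=
    ((logXCoth_isLittleO_logSinhc.def hc).and (eventually_gt_atTop 0)).exists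
  rw [norm_of_nonneg (logXCoth_pos hx).le, norm_of_nonneg (logSinhc_pos hx).le] at hle
  exact ⟨x, hx, hle⟩

theorem two_le_of_forall_logXCoth_lt {k : ℝ} (hk : 0 < k)
    (h : ∀ x, 0 < x → logXCoth x < k * logSinhc x) : 2 ≤ k := by
  have hle : ∀ x ∈ Ioi (0 : ℝ), 3 / cosh x ≤ k + 1 := fun x hx ↦ by
    have hx : 0 < x := hx
    have := calc x ^ 2 / (2 * cosh x)
      _ < log (cosh x) := sq_div_two_mul_cosh_lt_log_cosh hx
      _ ≤ (k + 1) * logSinhc x := by linarith [h x hx, logXCoth_eq x]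
      _ ≤ (k + 1) * (x ^ 2 / 6) := by gcongr; exact (logSinhc_lt_sq_div_six hx).le
    refine le_of_mul_le_mul_left ?_ (by positivity : 0 < x ^ 2 / 6)
    calc x ^ 2 / 6 * (3 / cosh x) = x ^ 2 / (2 * cosh x) := by field_simp; norm_num
      _ ≤ x ^ 2 / 6 * (k + 1) := by linarith
  have hlim : 3 / cosh 0 ≤ k + 1 :=
    ContinuousWithinAt.closure_le (f := fun x ↦ 3 / cosh x) (s := Ioi 0) (by simp)
      (continuous_const.div continuous_cosh fun x ↦ (cosh_pos x).ne').continuousWithinAt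
      continuousWithinAt_const hle
  norm_num at hlim
  linarith

theorem le_of_forall_add_two_lt_exp_add_exp {k p : ℝ} (hk : 0 < k) (hp : 0 < p)
    (h : ∀ x, 0 < x →
      k + 2 < 2 * exp (-(k * p * logSinhc x)) + k * exp (p * logXCoth x)) :
    12 / (5 * (k + 2)) ≤ p := by
  have hle : ∀ x ∈ Ioi (0 : ℝ),
      1 / (15 * cosh (2 * x)) ≤ k * p / 36 + p / 18 * exp (p * (x ^ 2 / 3)) := fun x hx ↦ by
    have hx : 0 < x := hx
    have hs := logSinhc_pos hx
    have ht := logXCoth_pos hx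
    have hs6 : logSinhc x ≤ x ^ 2 / 6 := (logSinhc_lt_sq_div_six hx).le
    have ht3 : logXCoth x ≤ x ^ 2 / 3 := by linarith [logXCoth_lt_two_mul_logSinhc hx]
    have hA := exp_neg_lt_one_sub_add_sq (by positivity : 0 < k * p * logSinhc x)
    have hB := exp_lt_one_add_add_sq_mul_exp (by positivity : 0 < p * logXCoth x)
    have hexp : 2 * logSinhc x - logXCoth x ≤
        k * p * logSinhc x ^ 2 + p * logXCoth x ^ 2 / 2 * exp (p * logXCoth x) := by
      refine le_of_mul_le_mul_left ?_ (by positivity : 0 < k * p)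
      linarith [h x hx, mul_lt_mul_of_pos_left hB hk]
    have := calc x ^ 4 * (1 / (15 * cosh (2 * x)))
      _ = x ^ 4 / (15 * cosh (2 * x)) := by ring
      _ ≤ 2 * logSinhc x - logXCoth x := (pow_four_div_mul_cosh_lt hx).le
      _ ≤ k * p * logSinhc x ^ 2 + p * logXCoth x ^ 2 / 2 * exp (p * logXCoth x) := hexp
      _ ≤ k * p * (x ^ 2 / 6) ^ 2 + p * (x ^ 2 / 3) ^ 2 / 2 * exp (p * (x ^ 2 / 3)) := by gcongr
      _ = x ^ 4 * (k * p / 36 + p / 18 * exp (p * (x ^ 2 / 3))) := by ring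
    exact le_of_mul_le_mul_left this (by positivity)
  have hlim : 1 / (15 * cosh (2 * 0)) ≤ k * p / 36 + p / 18 * exp (p * (0 ^ 2 / 3)) :=
    ContinuousWithinAt.closure_le (f := fun x ↦ 1 / (15 * cosh (2 * x)))
      (g := fun x ↦ k * p / 36 + p / 18 * exp (p * (x ^ 2 / 3))) (s := Ioi 0) (by simp)
      (continuous_const.div (by fun_prop) fun x ↦ by positivity).continuousWithinAt
      (Continuous.continuousWithinAt (by fun_prop)) hle
  norm_num at hlim
  rw [div_le_iff₀ (by positivity)]
  linarith

theorem wilker_chain_hyp_general {k : ℝ} (hk : 0 < k) (p : ℝ) :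
    (∀ x ∈ Ioi (0 : ℝ),
        k / (k + 2) * (sinh x / x) ^ (k * p) + 2 / (k + 2) * (tanh x / x) ^ p >
          2 / (k + 2) * (x / sinh x) ^ (k * p) + k / (k + 2) * (x / tanh x) ^ p ∧
        2 / (k + 2) * (x / sinh x) ^ (k * p) + k / (k + 2) * (x / tanh x) ^ p > 1) ↔
      (2 ≤ k ∧ p ≥ 12 / (5 * (k + 2))) := by
  refine Iff.trans (forall₂_congr fun _ hx ↦ wilker_chain_iff hk (mem_Ioi.1 hx)) ⟨fun h ↦ ?_, ?_⟩
  · have hp : 0 < p := by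
      obtain ⟨x, hx, hle⟩ := exists_logXCoth_le_mul_logSinhc hk
      by_contra! hp
      linarith [(h x hx).1, mul_le_mul_of_nonpos_left hle hp]
    refine ⟨two_le_of_forall_logXCoth_lt hk fun x hx ↦ ?_,
      le_of_forall_add_two_lt_exp_add_exp hk hp fun x hx ↦ (h x hx).2⟩
    exact lt_of_mul_lt_mul_left (by linarith [(h x hx).1]) hp.le
  · rintro ⟨hk, hp⟩ x hx
    have hp0 : 0 < p := lt_of_lt_of_le (by positivity) hp
    refine ⟨?_, add_two_lt_exp_add_exp hk hp hx⟩
    have := logSinhc_pos hx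
    calc p * logXCoth x < p * (2 * logSinhc x) := by
          gcongr; exact logXCoth_lt_two_mul_logSinhc hx
      _ ≤ k * p * logSinhc x := by
          rw [mul_comm k, mul_assoc]
          gcongr

theorem wilker_chain_hyp (k : ℝ) (hk : 1 ≤ k) (p : ℝ) (hp : p ≠ 0) :
    (∀ x ∈ Ioi (0 : ℝ),
        k / (k + 2) * (sinh x / x) ^ (k * p) + 2 / (k + 2) * (tanh x / x) ^ p >
          2 / (k + 2) * (x / sinh x) ^ (k * p) + k / (k + 2) * (x / tanh x) ^ p ∧
        2 / (k + 2) * (x / sinh x) ^ (k * p) + k / (k + 2) * (x / tanh x) ^ p > 1) ↔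
      (2 ≤ k ∧ p ≥ 12 / (5 * (k + 2))) :=
  wilker_chain_hyp_general (one_pos.trans_le hk) p
end
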